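/- arXiv:0901.0929 — 2 statements merged into one kernel-verified Lean document; each statement's English description precedes it below -/
import Mathlib

section
/- If W ∈ 𝒲 is finitely forcible in 𝒲, then for every λ, μ ∈ ℝ the function λW + μ is finitely forcible in 𝒲. -/
open MeasureTheory
open scoped Classical

noncomputable section

/-- The unit interval `[0,1]` as a subset of `ℝ`. -/
def I01 : Set ℝ := Set.Icc 0 1

/-- The cube `[0,1]^n`. -/
def cube (n : ℕ) : Set (Fin n → ℝ) := Set.univ.pi fun _ => I01

/-- `W` belongs to `𝒲`: a bounded symmetric measurable function on `[0,1]²`. -/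
def memW (W : ℝ → ℝ → ℝ) : Prop :=
  Measurable (Function.uncurry W) ∧
  (∀ x ∈ I01, ∀ y ∈ I01, W x y = W y x) ∧
  ∃ C : ℝ, ∀ x ∈ I01, ∀ y ∈ I01, |W x y| ≤ C

/-- `W` belongs to `𝒲₀`: a graphon, i.e. symmetric measurable with values in `[0,1]`. -/
def memW0 (W : ℝ → ℝ → ℝ) : Prop :=
  Measurable (Function.uncurry W) ∧
  (∀ x ∈ I01, ∀ y ∈ I01, W x y = W y x) ∧
  ∀ x ∈ I01, ∀ y ∈ I01, W x y ∈ Set.Icc (0 : ℝ) 1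

/-- Homomorphism density `t(F,W)` of a finite simple graph `F` in `W`. -/
def homDensity {n : ℕ} (F : SimpleGraph (Fin n)) (W : ℝ → ℝ → ℝ) : ℝ :=
  ∫ x in cube n,
    ∏ p ∈ Finset.univ.filter (fun p : Fin n × Fin n => p.1 < p.2 ∧ F.Adj p.1 p.2),
      W (x p.1) (x p.2)

/-- Two kernels are weakly isomorphic if all their homomorphism densities agree. -/
def WeaklyIsomorphic (U W : ℝ → ℝ → ℝ) : Prop :=
  ∀ (n : ℕ) (F : SimpleGraph (Fin n)), homDensity F U = homDensity F W

/-- `W` is finitely forcible within the class `A`. -/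
def FinitelyForcible (A : (ℝ → ℝ → ℝ) → Prop) (W : ℝ → ℝ → ℝ) : Prop :=
  A W ∧ ∃ (k : ℕ) (n : Fin k → ℕ) (F : ∀ i, SimpleGraph (Fin (n i))),
    ∀ U, A U → (∀ i, homDensity (F i) U = homDensity (F i) W) → WeaklyIsomorphic U W

/-- Density function `t^k(F,W)` of a `k`-labeled graph, as a function of the
labeled variables; the graph has `k` labeled and `m` unlabeled vertices. -/
def labDensity {k m : ℕ} (F : SimpleGraph (Fin (k + m))) (W : ℝ → ℝ → ℝ)
    (x : Fin k → ℝ) : ℝ :=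
  ∫ y in cube m,
    ∏ p ∈ Finset.univ.filter
        (fun p : Fin (k + m) × Fin (k + m) => p.1 < p.2 ∧ F.Adj p.1 p.2),
      W (Fin.append x y p.1) (Fin.append x y p.2)

/-!
For `λ ≠ 0` the densities of `λW + μ` expand over subsets of the edge set, so its densities of all
graphs on `n` vertices and those of `W` determine each other. If the graphs on vertex sets of sizes
`n₁, …, n_k` force `W`, they therefore force `λW + μ`.

For `λ = 0` the constant `μ` is forced by the graphs on four vertices: they determine the four-cycle
density `t(C₄, U - μ)`, and a bounded kernel with vanishing four-cycle density is zero almost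
everywhere. The latter holds because `t(C₄, V)` is the integral of the square of the codegree
function, and vanishing codegrees force the integral of `V` over every rectangle to vanish.
-/

section KernelOnProduct

open scoped ENNReal

variable {α β : Type*} [MeasurableSpace α] [MeasurableSpace β] {μ : Measure α} {ν : Measure β}

/-- By Fubini, the double integral in the hypothesis is `∫ x, (∫ y, F x y ∂ν) ^ 2 ∂μ`. -/
lemma ae_integral_eq_zero_of_integral_codegree_eq_zero [SFinite μ] [SFinite ν] {F : α → β → ℝ}
    (hF : Integrable (fun p : α × β × β => F p.1 p.2.1 * F p.1 p.2.2) (μ.prod (ν.prod ν)))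
    (h : ∫ q, ∫ x, F x q.1 * F x q.2 ∂μ ∂(ν.prod ν) = 0) :
    ∀ᵐ x ∂μ, ∫ y, F x y ∂ν = 0 := by
  have hsq (x : α) : ∫ q, F x q.1 * F x q.2 ∂(ν.prod ν) = (∫ y, F x y ∂ν) ^ 2 := by
    rw [integral_prod_mul (F x) (F x), sq]
  have hint : Integrable (fun x => (∫ y, F x y ∂ν) ^ 2) μ := by
    simpa only [hsq] using hF.integral_prod_left
  have hzero : ∫ x, (∫ y, F x y ∂ν) ^ 2 ∂μ = 0 := by
    have hswap := integral_integral_swap (f := fun x (q : β × β) => F x q.1 * F x q.2) hF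
    simpa only [hsq, h] using hswap
  filter_upwards [(integral_eq_zero_iff_of_nonneg (fun x => sq_nonneg _) hint).mp hzero]
    with x hx using eq_zero_of_pow_eq_zero hx

lemma ae_eq_zero_of_forall_setIntegral_prod_eq_zero {f : α × β → ℝ}
    (hf : Integrable f (μ.prod ν))
    (h : ∀ A B, MeasurableSet A → MeasurableSet B → ∫ q in A ×ˢ B, f q ∂(μ.prod ν) = 0) :
    f =ᵐ[μ.prod ν] 0 := by
  refine hf.ae_eq_of_withDensityᵥ_eq (integrable_zero _ _ _) ?_
  rw [withDensityᵥ_zero]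
  refine VectorMeasure.ext_of_generateFrom _ ?_ generateFrom_prod.symm isPiSystem_prod ?_
  · rintro _ ⟨A, hA, B, hB, rfl⟩
    simpa [withDensityᵥ_apply hf (hA.prod hB)] using h A B hA hB
  · simpa [withDensityᵥ_apply hf MeasurableSet.univ] using h .univ .univ .univ .univ

lemma ae_eq_zero_of_forall_ae_setIntegral_eq_zero [SFinite μ] [SFinite ν] {V : α → β → ℝ}
    (hV : Integrable (Function.uncurry V) (μ.prod ν))
    (h : ∀ B, MeasurableSet B → ∀ᵐ x ∂μ, ∫ y in B, V x y ∂ν = 0) :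
    ∀ᵐ q ∂(μ.prod ν), V q.1 q.2 = 0 := by
  refine ae_eq_zero_of_forall_setIntegral_prod_eq_zero hV fun A B _ hB => ?_
  rw [setIntegral_prod (fun q => V q.1 q.2) hV.integrableOn]
  exact integral_eq_zero_of_ae (ae_restrict_of_ae (h B hB))

variable [IsProbabilityMeasure μ] [IsProbabilityMeasure ν] {V : α → β → ℝ}

lemma integrable_cherry (hV : MemLp (Function.uncurry V) ∞ (μ.prod ν)) :
    Integrable (fun p : α × β × β => V p.1 p.2.1 * V p.1 p.2.2) (μ.prod (ν.prod ν)) := by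
  have hleft := hV.comp_measurePreserving
    ((MeasurePreserving.id μ).prod (measurePreserving_fst (μ := ν) (ν := ν)))
  have hright := hV.comp_measurePreserving
    ((MeasurePreserving.id μ).prod (measurePreserving_snd (μ := ν) (ν := ν)))
  exact (hright.mul' hleft).integrable le_top

lemma integrable_fourCycle (hV : MemLp (Function.uncurry V) ∞ (μ.prod ν)) :
    Integrable (fun p : (α × α) × β × β =>
      (V p.1.1 p.2.1 * V p.1.1 p.2.2) * (V p.1.2 p.2.1 * V p.1.2 p.2.2))
      ((μ.prod μ).prod (ν.prod ν)) := by
  have hedge {f : α × α → α} {g : β × β → β} (hf : MeasurePreserving f (μ.prod μ) μ)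
      (hg : MeasurePreserving g (ν.prod ν) ν) :
      MemLp (fun p : (α × α) × β × β => V (f p.1) (g p.2)) ∞ ((μ.prod μ).prod (ν.prod ν)) :=
    hV.comp_measurePreserving (hf.prod hg)
  have hcherry {f : α × α → α} (hf : MeasurePreserving f (μ.prod μ) μ) :
      MemLp (fun p : (α × α) × β × β => V (f p.1) p.2.1 * V (f p.1) p.2.2) ∞
        ((μ.prod μ).prod (ν.prod ν)) :=
    (hedge hf measurePreserving_snd).mul' (hedge hf measurePreserving_fst)
  exact ((hcherry measurePreserving_snd).mul' (hcherry measurePreserving_fst)).integrable le_top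

lemma ae_codegree_eq_zero_of_integral_fourCycle_eq_zero
    (hV : MemLp (Function.uncurry V) ∞ (μ.prod ν))
    (h : ∫ p, (V p.1.1 p.2.1 * V p.1.1 p.2.2) * (V p.1.2 p.2.1 * V p.1.2 p.2.2)
      ∂((μ.prod μ).prod (ν.prod ν)) = 0) :
    ∀ᵐ z ∂(ν.prod ν), ∫ x, V x z.1 * V x z.2 ∂μ = 0 := by
  have hint := integrable_fourCycle hV
  refine ae_integral_eq_zero_of_integral_codegree_eq_zero
    (F := fun (z : β × β) x => V x z.1 * V x z.2) hint.swap ?_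
  rw [← h, integral_prod _ hint]

theorem ae_eq_zero_of_integral_fourCycle_eq_zero (hV : MemLp (Function.uncurry V) ∞ (μ.prod ν))
    (h : ∫ p, (V p.1.1 p.2.1 * V p.1.1 p.2.2) * (V p.1.2 p.2.1 * V p.1.2 p.2.2)
      ∂((μ.prod μ).prod (ν.prod ν)) = 0) :
    ∀ᵐ q ∂(μ.prod ν), V q.1 q.2 = 0 := by
  have hcodegree := ae_codegree_eq_zero_of_integral_fourCycle_eq_zero hV h
  refine ae_eq_zero_of_forall_ae_setIntegral_eq_zero (hV.integrable le_top) fun B _ => ?_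
  refine ae_integral_eq_zero_of_integral_codegree_eq_zero ?_ ?_
  · refine (integrable_cherry hV).mono_measure ?_
    gcongr <;> exact Measure.restrict_le_self
  · rw [Measure.prod_restrict]
    exact integral_eq_zero_of_ae (ae_restrict_of_ae hcodegree)

end KernelOnProduct

section ProductCoordinates

variable {Ω : Type*} [MeasurableSpace Ω] {μ : Measure Ω}

lemma measurePreserving_pair_pi {ι : Type*} [Fintype ι] [IsProbabilityMeasure μ] {a b : ι}
    (hab : a ≠ b) :
    MeasurePreserving (fun x : ι → Ω => (x a, x b)) (Measure.pi fun _ => μ) (μ.prod μ) := by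
  refine ⟨by fun_prop, ?_⟩
  have hindep : ProbabilityTheory.IndepFun (fun x : ι → Ω => x a) (fun x => x b)
      (Measure.pi fun _ => μ) :=
    (ProbabilityTheory.iIndepFun_pi (X := fun _ => id) fun _ => aemeasurable_id).indepFun hab
  rw [hindep.map_prod_eq_prod_map_map (measurable_pi_apply a).aemeasurable
    (measurable_pi_apply b).aemeasurable]
  exact congrArg₂ Measure.prod (measurePreserving_eval (fun _ => μ) a).map_eq
    (measurePreserving_eval (fun _ => μ) b).map_eq

lemma measurePreserving_prod_prod_pi_four [SigmaFinite μ] :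
    MeasurePreserving (fun q : (Ω × Ω) × Ω × Ω => ![q.1.1, q.1.2, q.2.1, q.2.2])
      ((μ.prod μ).prod (μ.prod μ)) (Measure.pi fun _ => μ) := by
  have hmeas : Measurable (fun q : (Ω × Ω) × Ω × Ω => ![q.1.1, q.1.2, q.2.1, q.2.2]) := by
    simp only [measurable_pi_iff, Fin.forall_fin_succ, Matrix.cons_val_zero, Matrix.cons_val_succ,
      IsEmpty.forall_iff, and_true]
    refine ⟨?_, ?_, ?_, ?_⟩ <;> fun_prop
  refine ⟨hmeas, (Measure.pi_eq fun s hs => ?_).symm⟩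
  have hpre : (fun q : (Ω × Ω) × Ω × Ω => ![q.1.1, q.1.2, q.2.1, q.2.2]) ⁻¹' Set.univ.pi s =
      (s 0 ×ˢ s 1) ×ˢ (s 2 ×ˢ s 3) := by
    ext q
    simp [Fin.forall_fin_succ, and_assoc]
  rw [Measure.map_apply hmeas (.univ_pi hs), hpre]
  simp only [Measure.prod_prod, Fin.prod_univ_four, mul_assoc]

end ProductCoordinates

section UnitInterval

/-- The uniform probability measure on `[0,1]`, as a measure on `ℝ`. It turns integrals over
`cube n` into integrals against a product measure. -/
def unitMeasure : Measure ℝ := volume.restrict I01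

instance : IsProbabilityMeasure unitMeasure :=
  ⟨by simp [unitMeasure, I01]⟩

lemma volume_restrict_cube (n : ℕ) :
    volume.restrict (cube n) = Measure.pi fun _ : Fin n => unitMeasure := by
  rw [cube, volume_pi, Measure.restrict_pi_pi]
  rfl

lemma ae_mem_I01 : ∀ᵐ x ∂unitMeasure, x ∈ I01 :=
  ae_restrict_mem measurableSet_Icc

end UnitInterval

namespace memW

open scoped ENNReal

variable {W : ℝ → ℝ → ℝ}

lemma const (c : ℝ) : memW fun _ _ => c :=
  ⟨measurable_const, fun _ _ _ _ => rfl, |c|, fun _ _ _ _ => le_rfl⟩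

lemma affine (hW : memW W) (a b : ℝ) : memW fun x y => a * W x y + b := by
  obtain ⟨hmeas, hsymm, C, hC⟩ := hW
  refine ⟨(hmeas.const_mul a).add_const b, fun x hx y hy => by simp only [hsymm x hx y hy],
    |a| * C + |b|, fun x hx y hy => ?_⟩
  calc |a * W x y + b| ≤ |a| * |W x y| + |b| := by rw [← abs_mul]; exact abs_add_le _ _
    _ ≤ |a| * C + |b| := by gcongr; exact hC x hx y hy

lemma memLp_top_comp {Ω : Type*} [MeasurableSpace Ω] {P : Measure Ω} (hW : memW W) {f g : Ω → ℝ}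
    (hf : Measurable f) (hg : Measurable g) (hfI : ∀ᵐ ω ∂P, f ω ∈ I01)
    (hgI : ∀ᵐ ω ∂P, g ω ∈ I01) : MemLp (fun ω => W (f ω) (g ω)) ∞ P := by
  obtain ⟨hmeas, -, C, hC⟩ := hW
  refine memLp_top_of_bound (hmeas.comp (hf.prodMk hg)).aestronglyMeasurable C ?_
  filter_upwards [hfI, hgI] with ω hfω hgω using hC _ hfω _ hgω

lemma memLp_top (hW : memW W) :
    MemLp (Function.uncurry W) ∞ (unitMeasure.prod unitMeasure) :=
  hW.memLp_top_comp measurable_fst measurable_snd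
    (measurePreserving_fst.quasiMeasurePreserving.ae ae_mem_I01)
    (measurePreserving_snd.quasiMeasurePreserving.ae ae_mem_I01)

lemma integrable_prod {n : ℕ} (hW : memW W) (S : Finset (Fin n × Fin n)) :
    Integrable (fun x : Fin n → ℝ => ∏ p ∈ S, W (x p.1) (x p.2))
      (Measure.pi fun _ => unitMeasure) := by
  have hcoord (i : Fin n) : ∀ᵐ x ∂(Measure.pi fun _ : Fin n => unitMeasure), x i ∈ I01 :=
    (measurePreserving_eval _ i).quasiMeasurePreserving.ae ae_mem_I01
  have hedge (p : Fin n × Fin n) : MemLp (fun x : Fin n → ℝ => W (x p.1) (x p.2)) ∞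
      (Measure.pi fun _ => unitMeasure) :=
    hW.memLp_top_comp (by fun_prop) (by fun_prop) (hcoord p.1) (hcoord p.2)
  exact (MemLp.prod' (s := S) (p := fun _ => ∞) fun p _ => hedge p).integrable (by simp)

end memW

section Densities

variable {n : ℕ}

/-- The edges of `F`, each listed once as an increasing pair: the index set of the product in
`homDensity`. -/
def edgePairs (F : SimpleGraph (Fin n)) : Finset (Fin n × Fin n) :=
  Finset.univ.filter fun p => p.1 < p.2 ∧ F.Adj p.1 p.2

/-- The homomorphism density of the graph on `Fin n` whose edges are the pairs in `S`. Indexing by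
sets of pairs lets sums run over the subgraphs of a graph. -/
def pairDensity (S : Finset (Fin n × Fin n)) (W : ℝ → ℝ → ℝ) : ℝ :=
  ∫ x, ∏ p ∈ S, W (x p.1) (x p.2) ∂Measure.pi fun _ : Fin n => unitMeasure

lemma lt_of_mem_edgePairs {F : SimpleGraph (Fin n)} {p : Fin n × Fin n} (hp : p ∈ edgePairs F) :
    p.1 < p.2 :=
  (Finset.mem_filter.mp hp).2.1

lemma homDensity_eq_pairDensity (F : SimpleGraph (Fin n)) (W : ℝ → ℝ → ℝ) :
    homDensity F W = pairDensity (edgePairs F) W := by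
  rw [homDensity, volume_restrict_cube]
  rfl

lemma edgePairs_fromRel {S : Finset (Fin n × Fin n)} (hS : ∀ p ∈ S, p.1 < p.2) :
    edgePairs (SimpleGraph.fromRel fun a b => (a, b) ∈ S) = S := by
  ext ⟨a, b⟩
  simp only [edgePairs, Finset.mem_filter, Finset.mem_univ, true_and, SimpleGraph.fromRel_adj]
  constructor
  · rintro ⟨hlt, -, hab | hba⟩
    · exact hab
    · exact absurd (hS _ hba) hlt.not_gt
  · exact fun hab => ⟨hS _ hab, (hS _ hab).ne, Or.inl hab⟩

lemma pairDensity_eq_of_forall_homDensity_eq {U W : ℝ → ℝ → ℝ}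
    (h : ∀ F : SimpleGraph (Fin n), homDensity F U = homDensity F W)
    {S : Finset (Fin n × Fin n)} (hS : ∀ p ∈ S, p.1 < p.2) :
    pairDensity S U = pairDensity S W := by
  simpa only [homDensity_eq_pairDensity, edgePairs_fromRel hS] using
    h (SimpleGraph.fromRel fun a b => (a, b) ∈ S)

lemma pairDensity_affine {W : ℝ → ℝ → ℝ} (hW : memW W) (a b : ℝ) (S : Finset (Fin n × Fin n)) :
    pairDensity S (fun x y => a * W x y + b) =
      ∑ T ∈ S.powerset, a ^ T.card * b ^ (S \ T).card * pairDensity T W := by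
  have hexpand (x : Fin n → ℝ) : ∏ p ∈ S, (a * W (x p.1) (x p.2) + b) =
      ∑ T ∈ S.powerset, a ^ T.card * b ^ (S \ T).card * ∏ p ∈ T, W (x p.1) (x p.2) := by
    simp only [Finset.prod_add, Finset.prod_mul_distrib, Finset.prod_const, mul_right_comm]
  simp only [pairDensity, hexpand, ← integral_const_mul]
  exact integral_finsetSum _ fun T _ => (hW.integrable_prod T).const_mul _

lemma homDensity_affine_eq {U W : ℝ → ℝ → ℝ} (hU : memW U) (hW : memW W)
    (h : ∀ F : SimpleGraph (Fin n), homDensity F U = homDensity F W) (a b : ℝ)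
    (F : SimpleGraph (Fin n)) :
    homDensity F (fun x y => a * U x y + b) = homDensity F (fun x y => a * W x y + b) := by
  simp only [homDensity_eq_pairDensity, pairDensity_affine hU, pairDensity_affine hW]
  refine Finset.sum_congr rfl fun T hT => ?_
  rw [pairDensity_eq_of_forall_homDensity_eq h fun p hp =>
    lt_of_mem_edgePairs (Finset.mem_powerset.mp hT hp)]

lemma WeaklyIsomorphic.affine {U W : ℝ → ℝ → ℝ} (h : WeaklyIsomorphic U W) (hU : memW U)
    (hW : memW W) (a b : ℝ) :
    WeaklyIsomorphic (fun x y => a * U x y + b) (fun x y => a * W x y + b) :=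
  fun n => homDensity_affine_eq hU hW (h n) a b

lemma WeaklyIsomorphic.of_ae_eq {U W : ℝ → ℝ → ℝ}
    (h : ∀ᵐ q ∂(unitMeasure.prod unitMeasure), U q.1 q.2 = W q.1 q.2) :
    WeaklyIsomorphic U W := by
  intro n F
  simp only [homDensity_eq_pairDensity]
  refine integral_congr_ae ?_
  have hedges : ∀ᵐ x ∂(Measure.pi fun _ : Fin n => unitMeasure), ∀ p ∈ edgePairs F,
      U (x p.1) (x p.2) = W (x p.1) (x p.2) :=
    (Finset.eventually_all _).mpr fun p hp =>
      (measurePreserving_pair_pi (lt_of_mem_edgePairs hp).ne).quasiMeasurePreserving.ae h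
  filter_upwards [hedges] with x hx using Finset.prod_congr rfl hx

/-- The edges of the four-cycle on `Fin 4`, viewed as the complete bipartite graph with colour
classes `{0, 1}` and `{2, 3}`. -/
def fourCyclePairs : Finset (Fin 4 × Fin 4) := {0, 1} ×ˢ {2, 3}

lemma prod_fourCyclePairs (f : Fin 4 × Fin 4 → ℝ) :
    ∏ p ∈ fourCyclePairs, f p = (f (0, 2) * f (0, 3)) * (f (1, 2) * f (1, 3)) := by
  rw [fourCyclePairs, Finset.prod_product, Finset.prod_pair (by decide),
    Finset.prod_pair (by decide), Finset.prod_pair (by decide)]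

lemma pairDensity_fourCyclePairs {W : ℝ → ℝ → ℝ} (hW : memW W) :
    pairDensity fourCyclePairs W =
      ∫ p : (ℝ × ℝ) × ℝ × ℝ, (W p.1.1 p.2.1 * W p.1.1 p.2.2) * (W p.1.2 p.2.1 * W p.1.2 p.2.2)
        ∂((unitMeasure.prod unitMeasure).prod (unitMeasure.prod unitMeasure)) := by
  have hmap := measurePreserving_prod_prod_pi_four (μ := unitMeasure)
  have hmeas := (hW.integrable_prod fourCyclePairs).aestronglyMeasurable
  rw [← hmap.map_eq] at hmeas
  rw [pairDensity, ← hmap.map_eq, integral_map hmap.aemeasurable hmeas]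
  simp only [prod_fourCyclePairs]
  rfl

lemma memW.ae_eq_zero_of_pairDensity_fourCyclePairs_eq_zero {V : ℝ → ℝ → ℝ} (hV : memW V)
    (h : pairDensity fourCyclePairs V = 0) :
    ∀ᵐ q ∂(unitMeasure.prod unitMeasure), V q.1 q.2 = 0 :=
  ae_eq_zero_of_integral_fourCycle_eq_zero hV.memLp_top (pairDensity_fourCyclePairs hV ▸ h)

lemma memW.ae_eq_const_of_forall_homDensity_eq {U : ℝ → ℝ → ℝ} {c : ℝ} (hU : memW U)
    (h : ∀ F : SimpleGraph (Fin 4), homDensity F U = homDensity F fun _ _ => c) :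
    ∀ᵐ q ∂(unitMeasure.prod unitMeasure), U q.1 q.2 = c := by
  have hshift := homDensity_affine_eq hU (memW.const c) h 1 (-c)
  have hzero : pairDensity fourCyclePairs (fun x y => 1 * U x y + -c) = 0 := by
    rw [pairDensity_eq_of_forall_homDensity_eq hshift (by decide)]
    simp only [pairDensity, prod_fourCyclePairs, one_mul, add_neg_cancel, mul_zero, integral_zero]
  filter_upwards [(hU.affine 1 (-c)).ae_eq_zero_of_pairDensity_fourCyclePairs_eq_zero hzero]
    with q hq
  linarith

end Densities

namespace FinitelyForcible

lemma of_finite {ι : Type*} [Finite ι] {A : (ℝ → ℝ → ℝ) → Prop} {W : ℝ → ℝ → ℝ} (hW : A W)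
    (n : ι → ℕ) (F : ∀ i, SimpleGraph (Fin (n i)))
    (h : ∀ U, A U → (∀ i, homDensity (F i) U = homDensity (F i) W) → WeaklyIsomorphic U W) :
    FinitelyForcible A W := by
  obtain ⟨k, ⟨e⟩⟩ := Finite.exists_equiv_fin ι
  exact ⟨hW, k, fun j => n (e.symm j), fun j => F (e.symm j), fun U hU hdens =>
    h U hU (e.symm.surjective.forall.mpr hdens)⟩

lemma const (c : ℝ) : FinitelyForcible memW fun _ _ => c :=
  of_finite (memW.const c) (fun _ : SimpleGraph (Fin 4) => 4) id fun _ hU hdens =>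
    .of_ae_eq (hU.ae_eq_const_of_forall_homDensity_eq hdens)

lemma affine {W : ℝ → ℝ → ℝ} (h : FinitelyForcible memW W) {a : ℝ} (ha : a ≠ 0) (b : ℝ) :
    FinitelyForcible memW fun x y => a * W x y + b := by
  obtain ⟨hW, k, n, F, hforce⟩ := h
  have haW := hW.affine a b
  refine of_finite haW (fun q : (i : Fin k) × SimpleGraph (Fin (n i)) => n q.1) Sigma.snd
    fun U hU hdens => ?_
  have hV : memW fun x y => a⁻¹ * U x y + -(a⁻¹ * b) := hU.affine _ _
  have hinv (x y : ℝ) : a⁻¹ * (a * W x y + b) + -(a⁻¹ * b) = W x y := by field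
  have hUV (x y : ℝ) : a * (a⁻¹ * U x y + -(a⁻¹ * b)) + b = U x y := by field
  have hVW : WeaklyIsomorphic (fun x y => a⁻¹ * U x y + -(a⁻¹ * b)) W :=
    hforce _ hV fun i => by
      simpa only [hinv] using
        homDensity_affine_eq hU haW (fun G => hdens ⟨i, G⟩) a⁻¹ (-(a⁻¹ * b)) (F i)
  simpa only [hUV] using hVW.affine hV hW a b

end FinitelyForcible

/-- if `W ∈ 𝒲` is finitely forcible in `𝒲`, then so is `λW + μ`. -/
theorem statement2 (W : ℝ → ℝ → ℝ) (h : FinitelyForcible memW W) (lam mu : ℝ) :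
    FinitelyForcible memW (fun x y => lam * W x y + mu) := by
  rcases eq_or_ne lam 0 with rfl | hlam
  · simpa only [zero_mul, zero_add] using FinitelyForcible.const mu
  · exact h.affine hlam mu
end
end

section
/- Let p(z) = a₁z + a₂z² + … + a_nzⁿ be a real polynomial with zero constant term which is a bijection from ℝ to ℝ, and let W ∈ 𝒲. If p(W), defined by substituting W into p as an integral kernel operator, is finitely forcible in 𝒲, then W is finitely forcible in 𝒲. -/
open MeasureTheory
open scoped Classical

noncomputable section

/-- Kernel-operator product `(U∘V)(x,y) = ∫₀¹ U(x,z)V(z,y) dz`. -/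
def kerMul (U V : ℝ → ℝ → ℝ) : ℝ → ℝ → ℝ :=
  fun x y => ∫ z in I01, U x z * V z y

/-- `kerPow U i = U^{∘(i+1)}`, the `(i+1)`-st kernel-operator power of `U`. -/
def kerPow (U : ℝ → ℝ → ℝ) : ℕ → (ℝ → ℝ → ℝ)
  | 0 => U
  | i + 1 => kerMul (kerPow U i) U

/-- `p(U) = Σ_{i=1}^n a_i U^{∘i}` where `a i` is the coefficient of `z^{i+1}`. -/
def kerPoly (n : ℕ) (a : Fin n → ℝ) (U : ℝ → ℝ → ℝ) : ℝ → ℝ → ℝ :=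
  fun x y => ∑ i, a i * kerPow U i x y

/-!
Write `p` for the polynomial with coefficients `a`. Expanding `p` edge by edge and reading
`U^{∘i}` on an edge as a path of length `i`, every density of `p(U)` is a linear combination of
densities of `U`. Hence finitely many densities of `U` fix those that force `p(W)`, so that `p(U)`
and `p(W)` become weakly isomorphic.

It remains to recover the densities of `U` from those of `p(U)`. By Stone–Weierstrass there are
polynomials `q` without constant term such that `q ∘ p` is uniformly close to the identity on the
spectrum of the integral operator of `U`, so `q(p(U))` tends to `U` in operator norm on `L²`. The
kernels `q(p(U))` need not be uniformly bounded, but each edge of a simple graph separately enters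
the density through a bilinear form of its integral operator. The density of `U` is therefore an
iterated limit, one edge at a time, of linear combinations of densities of `p(U)`.
-/

section Kernels

variable {α : Type*} [MeasurableSpace α]

variable (α) in
/-- Bounded measurable kernels `α × α → ℝ`, in curried form. -/
def boundedKernel : Submodule ℝ (α → α → ℝ) where
  carrier := {A | Measurable (Function.uncurry A) ∧ ∃ C, ∀ x y, |A x y| ≤ C}
  zero_mem' := ⟨measurable_const, 0, by simp⟩
  add_mem' := by
    rintro A B ⟨hA, C, hC⟩ ⟨hB, D, hD⟩
    exact ⟨hA.add hB, C + D, fun x y => (abs_add_le _ _).trans (add_le_add (hC x y) (hD x y))⟩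
  smul_mem' := by
    rintro c A ⟨hA, C, hC⟩
    refine ⟨hA.const_mul c, |c| * C, fun x y => ?_⟩
    simpa [abs_mul] using mul_le_mul_of_nonneg_left (hC x y) (abs_nonneg c)

instance : CoeFun (boundedKernel α) fun _ => α → α → ℝ := ⟨Subtype.val⟩

namespace boundedKernel

@[ext]
lemma ext {A B : boundedKernel α} (h : ∀ x y, A x y = B x y) : A = B :=
  Subtype.ext (funext₂ h)

lemma measurable_comp {β : Type*} [MeasurableSpace β] (A : boundedKernel α) {f g : β → α}
    (hf : Measurable f) (hg : Measurable g) : Measurable fun b => A (f b) (g b) :=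
  A.2.1.comp (hf.prodMk hg)

lemma exists_bound (A : boundedKernel α) : ∃ C, 0 ≤ C ∧ ∀ x y, |A x y| ≤ C :=
  A.2.2.elim fun C hC => ⟨max C 0, le_max_right _ _, fun x y => (hC x y).trans (le_max_left _ _)⟩

variable (α) in
/-- Symmetric bounded measurable kernels. -/
def symmKernel : Submodule ℝ (boundedKernel α) where
  carrier := {A | ∀ x y, A x y = A y x}
  zero_mem' := fun _ _ => rfl
  add_mem' hA hB x y := congrArg₂ (· + ·) (hA x y) (hB x y)
  smul_mem' c _ hA x y := congrArg (c * ·) (hA x y)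

section Composition

variable (μ : Measure α) [IsFiniteMeasure μ]

lemma integrable_comp_mul_comp {β : Type*} [MeasurableSpace β] {ν : Measure β} [IsFiniteMeasure ν]
    (A B : boundedKernel α) {f g h k : β → α} (hf : Measurable f) (hg : Measurable g)
    (hh : Measurable h) (hk : Measurable k) :
    Integrable (fun b => A (f b) (g b) * B (h b) (k b)) ν := by
  obtain ⟨C, -, hC⟩ := exists_bound A
  obtain ⟨D, -, hD⟩ := exists_bound B
  refine Integrable.mul_bdd (.of_bound (measurable_comp A hf hg).aestronglyMeasurable C
    (.of_forall fun b => hC _ _)) (measurable_comp B hh hk).aestronglyMeasurable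
    (.of_forall fun b => hD _ _)

/-- The kernel-operator product `(A ∘ B)(x, y) = ∫ A(x, z) B(z, y) dμ(z)`. -/
def comp (A B : boundedKernel α) : boundedKernel α where
  val x y := ∫ z, A x z * B z y ∂μ
  property := by
    obtain ⟨C, hC0, hC⟩ := exists_bound A
    obtain ⟨D, -, hD⟩ := exists_bound B
    refine ⟨?_, C * D * μ.real Set.univ, fun x y => ?_⟩
    · have hmeas : Measurable fun q : (α × α) × α => A q.1.1 q.2 * B q.2 q.1.2 :=
        (measurable_comp A (by fun_prop) (by fun_prop)).mul
          (measurable_comp B (by fun_prop) (by fun_prop))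
      exact hmeas.stronglyMeasurable.integral_prod_right.measurable
    · have hbound (z : α) : ‖A x z * B z y‖ ≤ C * D := by
        rw [norm_mul]
        exact mul_le_mul (hC x z) (hD z y) (norm_nonneg _) hC0
      exact norm_integral_le_of_norm_le_const (.of_forall hbound)

lemma comp_assoc (A B C : boundedKernel α) : comp μ (comp μ A B) C = comp μ A (comp μ B C) := by
  obtain ⟨c, -, hc⟩ := exists_bound C
  ext x y
  have hintegrable : Integrable (fun q : α × α => A x q.2 * B q.2 q.1 * C q.1 y) (μ.prod μ) :=
    (integrable_comp_mul_comp A B (by fun_prop) (by fun_prop) (by fun_prop) (by fun_prop)).mul_bdd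
      (measurable_comp C (by fun_prop) (by fun_prop)).aestronglyMeasurable
      (.of_forall fun q => hc _ _)
  calc ∫ z, (∫ w, A x w * B w z ∂μ) * C z y ∂μ
      = ∫ z, ∫ w, A x w * B w z * C z y ∂μ ∂μ := by simp_rw [integral_mul_const]
    _ = ∫ w, ∫ z, A x w * B w z * C z y ∂μ ∂μ := integral_integral_swap hintegrable
    _ = ∫ w, A x w * (∫ z, B w z * C z y ∂μ) ∂μ := by simp_rw [mul_assoc, integral_const_mul]

/-- `kernelPow μ A i` is the power `A^{∘(i+1)}`; the index is shifted because `comp` need not have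
a unit. -/
def kernelPow (A : boundedKernel α) : ℕ → boundedKernel α
  | 0 => A
  | i + 1 => comp μ (kernelPow A i) A

/-- `p(A)` for the polynomial `p(z) = ∑ i, a i * z ^ (i + 1)`. -/
def kernelPoly {n : ℕ} (a : Fin n → ℝ) (A : boundedKernel α) : boundedKernel α :=
  ∑ i, a i • kernelPow μ A i

lemma comp_kernelPow (A : boundedKernel α) (i : ℕ) :
    comp μ A (kernelPow μ A i) = kernelPow μ A (i + 1) := by
  induction i with
  | zero => rfl
  | succ i ih =>
    change comp μ A (comp μ (kernelPow μ A i) A) = comp μ (kernelPow μ A (i + 1)) A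
    rw [← comp_assoc, ih]

variable {μ} in
lemma kernelPow_mem_symmKernel {A : boundedKernel α} (hA : A ∈ symmKernel α) (i : ℕ) :
    kernelPow μ A i ∈ symmKernel α := by
  induction i with
  | zero => exact hA
  | succ i ih =>
    intro x y
    calc ∫ z, kernelPow μ A i x z * A z y ∂μ
        = ∫ z, A y z * kernelPow μ A i z x ∂μ := by simp_rw [ih x, hA _ y, mul_comm]
      _ = kernelPow μ A (i + 1) y x := by rw [← comp_kernelPow]; rfl

variable {μ} in
lemma kernelPoly_mem_symmKernel {n : ℕ} (a : Fin n → ℝ) {A : boundedKernel α}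
    (hA : A ∈ symmKernel α) : kernelPoly μ a A ∈ symmKernel α :=
  Submodule.sum_mem _ fun i _ => Submodule.smul_mem _ _ (kernelPow_mem_symmKernel hA i)

end Composition

end boundedKernel

end Kernels

section IntegralOperator

open boundedKernel

variable {α : Type*} [MeasurableSpace α]

/-- The action `f ↦ ∫ A(·, y) f(y) dμ(y)` of a kernel on functions. -/
def integralTransform (μ : Measure α) (A : boundedKernel α) (f : α → ℂ) (x : α) : ℂ :=
  ∫ y, (A x y : ℂ) * f y ∂μ

namespace integralTransform

variable {μ : Measure α} {f g : α → ℂ}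

lemma integrable_mul (A : boundedKernel α) (hf : Integrable f μ) (x : α) :
    Integrable (fun y => (A x y : ℂ) * f y) μ := by
  obtain ⟨C, -, hC⟩ := exists_bound A
  refine hf.bdd_mul (c := C) ?_ (.of_forall fun y => by simpa using hC x y)
  exact (measurable_comp A measurable_const measurable_id).complex_ofReal.aestronglyMeasurable

lemma integrable_mul_mul [SFinite μ] (A : boundedKernel α) (hf : Integrable f μ)
    (hg : Integrable g μ) :
    Integrable (fun q : α × α => f q.1 * A q.1 q.2 * g q.2) (μ.prod μ) := by
  obtain ⟨C, -, hC⟩ := exists_bound A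
  have hmeas : AEStronglyMeasurable (fun q : α × α => (A q.1 q.2 : ℂ)) (μ.prod μ) :=
    (measurable_comp A measurable_fst measurable_snd).complex_ofReal.aestronglyMeasurable
  refine ((hf.mul_prod hg).mul_bdd (c := C) hmeas (.of_forall fun q => ?_)).congr
    (.of_forall fun q => mul_right_comm _ _ _)
  simpa using hC q.1 q.2

lemma congr_ae (A : boundedKernel α) (h : f =ᵐ[μ] g) :
    integralTransform μ A f = integralTransform μ A g := by
  ext x
  refine integral_congr_ae ?_
  filter_upwards [h] with y hy
  rw [hy]

lemma add_right (A : boundedKernel α) (hf : Integrable f μ) (hg : Integrable g μ) :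
    integralTransform μ A (f + g) = integralTransform μ A f + integralTransform μ A g := by
  ext x
  simp only [integralTransform, Pi.add_apply, mul_add]
  exact integral_add (integrable_mul A hf x) (integrable_mul A hg x)

lemma smul_right (A : boundedKernel α) (c : ℂ) (f : α → ℂ) :
    integralTransform μ A (c • f) = c • integralTransform μ A f := by
  ext x
  simp only [integralTransform, Pi.smul_apply, smul_eq_mul, mul_left_comm _ c]
  exact integral_const_mul _ _

lemma add_left (A B : boundedKernel α) (hf : Integrable f μ) :
    integralTransform μ (A + B) f = integralTransform μ A f + integralTransform μ B f := by
  ext x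
  simp only [integralTransform, Pi.add_apply, Submodule.coe_add, Complex.ofReal_add, add_mul]
  exact integral_add (integrable_mul A hf x) (integrable_mul B hf x)

lemma smul_left (c : ℝ) (A : boundedKernel α) (f : α → ℂ) :
    integralTransform μ (c • A) f = c • integralTransform μ A f := by
  ext x
  simp only [integralTransform, Pi.smul_apply, Submodule.coe_smul, smul_eq_mul, Complex.ofReal_mul,
    mul_assoc, Complex.real_smul]
  exact integral_const_mul _ _

end integralTransform

variable {μ : Measure α} [IsProbabilityMeasure μ]

lemma integrable_coeFn_Lp_two (f : Lp ℂ 2 μ) : Integrable f μ :=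
  (Lp.memLp f).integrable (by norm_num)

lemma integral_norm_le_norm_Lp_two (f : Lp ℂ 2 μ) : ∫ x, ‖f x‖ ∂μ ≤ ‖f‖ := by
  rw [integral_norm_eq_lintegral_enorm (Lp.aestronglyMeasurable f), Lp.norm_def,
    ← eLpNorm_one_eq_lintegral_enorm]
  exact ENNReal.toReal_mono (Lp.eLpNorm_ne_top f)
    (eLpNorm_le_eLpNorm_of_exponent_le (by norm_num) (Lp.aestronglyMeasurable f))

lemma norm_Lp_two_le_of_ae_bound {f : Lp ℂ 2 μ} {C : ℝ} (hC : 0 ≤ C) (h : ∀ᵐ x ∂μ, ‖f x‖ ≤ C) :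
    ‖f‖ ≤ C := by
  simpa [measureUnivNNReal] using Lp.norm_le_of_ae_bound hC h

lemma exists_Lp_two_of_bound {f : α → ℝ} (hf : Measurable f) {C : ℝ} (hC : 0 ≤ C)
    (hfC : ∀ x, |f x| ≤ C) : ∃ g : Lp ℂ 2 μ, g =ᵐ[μ] (fun x => (f x : ℂ)) ∧ ‖g‖ ≤ C := by
  have hLp : MemLp (fun x => (f x : ℂ)) 2 μ :=
    (MemLp.of_bound hf.aestronglyMeasurable C (.of_forall hfC)).ofReal
  refine ⟨hLp.toLp, hLp.coeFn_toLp, norm_Lp_two_le_of_ae_bound hC ?_⟩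
  filter_upwards [hLp.coeFn_toLp] with x hx
  simpa [hx] using hfC x

namespace integralTransform

lemma norm_le {A : boundedKernel α} {C : ℝ} (hC : ∀ x y, |A x y| ≤ C) (f : Lp ℂ 2 μ) (x : α) :
    ‖integralTransform μ A f x‖ ≤ C * ‖f‖ := by
  have hC0 : 0 ≤ C := (abs_nonneg _).trans (hC x x)
  have hle (y : α) : ‖(A x y : ℂ) * f y‖ ≤ C * ‖f y‖ := by
    rw [norm_mul]
    exact mul_le_mul_of_nonneg_right (by simpa using hC x y) (norm_nonneg _)
  calc ‖∫ y, (A x y : ℂ) * f y ∂μ‖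
      ≤ ∫ y, C * ‖f y‖ ∂μ :=
        norm_integral_le_of_norm_le ((integrable_coeFn_Lp_two f).norm.const_mul C) (.of_forall hle)
    _ = C * ∫ y, ‖f y‖ ∂μ := integral_const_mul _ _
    _ ≤ C * ‖f‖ := mul_le_mul_of_nonneg_left (integral_norm_le_norm_Lp_two f) hC0

lemma memLp (A : boundedKernel α) (f : Lp ℂ 2 μ) : MemLp (integralTransform μ A f) 2 μ := by
  obtain ⟨C, -, hC⟩ := exists_bound A
  have hmeas : StronglyMeasurable fun q : α × α => (A q.1 q.2 : ℂ) * f q.2 :=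
    (measurable_comp A measurable_fst measurable_snd).complex_ofReal.stronglyMeasurable.mul
      ((Lp.stronglyMeasurable f).comp_measurable measurable_snd)
  exact .of_bound hmeas.integral_prod_right.aestronglyMeasurable _ (.of_forall (norm_le hC f))

end integralTransform

variable (μ) in
/-- The integral operator on `L²(μ; ℂ)` with kernel `A`, as a linear function of `A`. The scalars
are complex so that the continuous functional calculus applies. -/
def integralOperator : boundedKernel α →ₗ[ℝ] (Lp ℂ 2 μ →L[ℂ] Lp ℂ 2 μ) where
  toFun A := LinearMap.mkContinuousOfExistsBound
    { toFun f := (integralTransform.memLp A f).toLp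
      map_add' f g := by
        rw [← MemLp.toLp_add, MemLp.toLp_eq_toLp_iff,
          integralTransform.congr_ae A (Lp.coeFn_add f g),
          integralTransform.add_right A (integrable_coeFn_Lp_two f) (integrable_coeFn_Lp_two g)]
      map_smul' c f := by
        rw [RingHom.id_apply, ← MemLp.toLp_const_smul, MemLp.toLp_eq_toLp_iff,
          integralTransform.congr_ae A (Lp.coeFn_smul c f), integralTransform.smul_right] } <| by
    obtain ⟨C, hC0, hC⟩ := exists_bound A
    refine ⟨C, fun f => norm_Lp_two_le_of_ae_bound (by positivity) ?_⟩
    filter_upwards [MemLp.coeFn_toLp (integralTransform.memLp A f)] with x hx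
    exact (congrArg norm hx).trans_le (integralTransform.norm_le hC f x)
  map_add' A B := by
    ext1 f
    exact (MemLp.toLp_congr (integralTransform.memLp (A + B) f) _
      (.of_eq (integralTransform.add_left A B (integrable_coeFn_Lp_two f)))).trans
      (MemLp.toLp_add (integralTransform.memLp A f) (integralTransform.memLp B f))
  map_smul' c A := by
    ext1 f
    exact (MemLp.toLp_congr (integralTransform.memLp (c • A) f) _
      (.of_eq (integralTransform.smul_left c A f))).trans
      (MemLp.toLp_const_smul c (integralTransform.memLp A f))

namespace integralOperator

lemma coeFn_apply (A : boundedKernel α) (f : Lp ℂ 2 μ) :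
    integralOperator μ A f =ᵐ[μ] integralTransform μ A f :=
  MemLp.coeFn_toLp (integralTransform.memLp A f)

lemma inner_apply (A : boundedKernel α) (f g : Lp ℂ 2 μ) :
    inner ℂ f (integralOperator μ A g) = ∫ x, ∫ y, star (f x) * A x y * g y ∂μ ∂μ := by
  rw [L2.inner_def]
  refine integral_congr_ae ?_
  filter_upwards [coeFn_apply A g] with x hx
  simp only [hx, integralTransform, RCLike.inner_apply', mul_assoc]
  exact (integral_const_mul _ _).symm

lemma isSelfAdjoint {A : boundedKernel α} (hA : A ∈ symmKernel α) :
    IsSelfAdjoint (integralOperator μ A) := by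
  rw [ContinuousLinearMap.isSelfAdjoint_iff_isSymmetric]
  intro f g
  have hg : Integrable (fun x => star (g x)) μ :=
    Complex.conjCLE.toContinuousLinearMap.integrable_comp (integrable_coeFn_Lp_two g)
  calc inner ℂ (integralOperator μ A f) g
      = star (∫ x, ∫ y, star (g x) * A x y * f y ∂μ ∂μ) := by
        rw [← inner_apply]
        exact (inner_conj_symm _ _).symm
    _ = star (∫ y, ∫ x, star (g x) * A x y * f y ∂μ ∂μ) :=
        congrArg star (integral_integral_swap
          (integralTransform.integrable_mul_mul A hg (integrable_coeFn_Lp_two f)))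
    _ = ∫ y, ∫ x, star (f y) * A y x * g x ∂μ ∂μ := by
        simp only [Complex.star_def, ← integral_conj, map_mul, Complex.conj_conj,
          Complex.conj_ofReal]
        refine integral_congr_ae (.of_forall fun y => integral_congr_ae (.of_forall fun x => ?_))
        simp only [hA x y]
        ring
    _ = inner ℂ f (integralOperator μ A g) := (inner_apply A f g).symm

lemma map_comp (A B : boundedKernel α) :
    integralOperator μ (comp μ A B) = integralOperator μ A * integralOperator μ B := by
  ext1 f
  refine Lp.ext ?_
  filter_upwards [coeFn_apply A (integralOperator μ B f), coeFn_apply (comp μ A B) f] with x h₁ h₂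
  have hA : Integrable (fun z => (A x z : ℂ)) μ := by
    simpa using integralTransform.integrable_mul A (integrable_const 1) x
  have hcomp (y : α) : (comp μ A B x y : ℂ) = ∫ z, (A x z : ℂ) * B z y ∂μ :=
    integral_ofReal.symm.trans (by push_cast; rfl)
  calc integralOperator μ (comp μ A B) f x
      = ∫ y, ∫ z, A x z * B z y * f y ∂μ ∂μ := by
        simp only [h₂, integralTransform, hcomp, integral_mul_const]
    _ = ∫ z, ∫ y, A x z * B z y * f y ∂μ ∂μ :=
        (integral_integral_swap
          (integralTransform.integrable_mul_mul B hA (integrable_coeFn_Lp_two f))).symm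
    _ = ∫ z, (A x z : ℂ) * integralTransform μ B f z ∂μ := by
        simp only [integralTransform, mul_assoc, integral_const_mul]
    _ = integralOperator μ A (integralOperator μ B f) x := by
        rw [h₁, integralTransform.congr_ae A (coeFn_apply B f), integralTransform]

lemma map_kernelPow (A : boundedKernel α) (i : ℕ) :
    integralOperator μ (kernelPow μ A i) = integralOperator μ A ^ (i + 1) := by
  induction i with
  | zero => rw [zero_add, pow_one, kernelPow]
  | succ i ih => rw [kernelPow, map_comp, ih, ← pow_succ]

lemma abs_integral_mul_mul_le (A : boundedKernel α) {f g : α → ℝ} (hf : Measurable f)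
    (hg : Measurable g) {C D : ℝ} (hfC : ∀ x, |f x| ≤ C) (hgD : ∀ x, |g x| ≤ D) :
    |∫ x, ∫ y, f x * A x y * g y ∂μ ∂μ| ≤ C * ‖integralOperator μ A‖ * D := by
  obtain ⟨x₀⟩ := μ.nonempty_of_neZero
  have hC := (abs_nonneg _).trans (hfC x₀)
  have hD := (abs_nonneg _).trans (hgD x₀)
  obtain ⟨f', hff', hf'⟩ := exists_Lp_two_of_bound (μ := μ) hf hC hfC
  obtain ⟨g', hgg', hg'⟩ := exists_Lp_two_of_bound (μ := μ) hg hD hgD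
  have hinner : ((∫ x, ∫ y, f x * A x y * g y ∂μ ∂μ : ℝ) : ℂ) =
      inner ℂ f' (integralOperator μ A g') := by
    rw [inner_apply]
    refine integral_ofReal.symm.trans (integral_congr_ae ?_)
    filter_upwards [hff'] with x hx
    refine integral_ofReal.symm.trans (integral_congr_ae ?_)
    filter_upwards [hgg'] with y hy
    simp [hx, hy]
  calc |∫ x, ∫ y, f x * A x y * g y ∂μ ∂μ|
      = ‖inner ℂ f' (integralOperator μ A g')‖ := by
        rw [← hinner, Complex.norm_real, Real.norm_eq_abs]
    _ ≤ ‖f'‖ * (‖integralOperator μ A‖ * ‖g'‖) :=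
        (norm_inner_le_norm _ _).trans (by gcongr; exact ContinuousLinearMap.le_opNorm _ _)
    _ ≤ C * ‖integralOperator μ A‖ * D := by
        rw [← mul_assoc]
        gcongr

end integralOperator

end IntegralOperator

section Approximation

open Polynomial

variable {S : Type*} [TopologicalSpace S]

lemma exists_polynomial_comp_near_of_injective {f : C(S, ℝ)} (hf : Function.Injective f)
    (g : C(S, ℝ)) {K : Set S} (hK : IsCompact K) {ε : ℝ} (hε : 0 < ε) :
    ∃ q : ℝ[X], ∀ x ∈ K, |q.eval (f x) - g x| < ε := by
  have hsep : (Algebra.adjoin ℝ {f}).SeparatesPoints := fun x y hxy =>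
    ⟨f, ⟨f, Algebra.self_mem_adjoin_singleton ℝ f, rfl⟩, hf.ne hxy⟩
  obtain ⟨h, hh, hnear⟩ :=
    ContinuousMap.exists_mem_subalgebra_near_continuous_of_isCompact_of_separatesPoints hsep g hK hε
  rw [Algebra.adjoin_singleton_eq_range_aeval] at hh
  obtain ⟨q, rfl⟩ := hh
  refine ⟨q, fun x hx => ?_⟩
  simpa [Polynomial.aeval_continuousMap_apply] using hnear x hx

/-- The polynomial `∑ i, a i * X ^ (i + 1)`; these are the polynomials that can be evaluated at a
kernel. -/
def kernelPolynomial {n : ℕ} (a : Fin n → ℝ) : ℝ[X] := ∑ i, C (a i) * X ^ ((i : ℕ) + 1)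

lemma eval_kernelPolynomial {n : ℕ} (a : Fin n → ℝ) (t : ℝ) :
    (kernelPolynomial a).eval t = ∑ i, a i * t ^ ((i : ℕ) + 1) := by
  simp [kernelPolynomial, eval_finsetSum]

lemma exists_kernelPolynomial_eq {q : ℝ[X]} (hq : q.eval 0 = 0) :
    ∃ (m : ℕ) (b : Fin m → ℝ), kernelPolynomial b = q := by
  refine ⟨q.divX.natDegree + 1, fun i => q.divX.coeff i, ?_⟩
  have hdiv := q.divX.as_sum_range_C_mul_X_pow
  calc kernelPolynomial (fun i : Fin (q.divX.natDegree + 1) => q.divX.coeff i)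
      = q.divX * X := by
        conv_rhs => rw [hdiv]
        rw [kernelPolynomial, Finset.sum_mul, ← Fin.sum_univ_eq_sum_range
          (fun i => C (q.divX.coeff i) * X ^ i * X)]
        simp only [pow_succ, mul_assoc]
    _ = q := by
        conv_rhs => rw [← divX_mul_X_add q, coeff_zero_eq_eval_zero, hq, C_0, add_zero]

lemma exists_kernelPolynomial_comp_near_id {n : ℕ} {a : Fin n → ℝ}
    (ha : Function.Injective fun t : ℝ => (kernelPolynomial a).eval t) (M : ℝ) {ε : ℝ}
    (hε : 0 < ε) : ∃ (m : ℕ) (b : Fin m → ℝ), ∀ t : ℝ, |t| ≤ M →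
      |((kernelPolynomial b).comp (kernelPolynomial a) - X).eval t| ≤ ε := by
  have hsub : (kernelPolynomial a).eval 0 = 0 := by simp [eval_kernelPolynomial]
  obtain ⟨q, hq⟩ := exists_polynomial_comp_near_of_injective
    (f := (kernelPolynomial a).toContinuousMap) ha (ContinuousMap.id ℝ)
    (isCompact_closedBall (0 : ℝ) |M|) (half_pos hε)
  have hq0 : |q.eval 0| < ε / 2 := by simpa [hsub] using hq 0 (by simp)
  obtain ⟨m, b, hb⟩ := exists_kernelPolynomial_eq (q := q - C (q.eval 0)) (by simp)
  refine ⟨m, b, fun t ht => ?_⟩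
  have hqt : |q.eval ((kernelPolynomial a).eval t) - t| < ε / 2 :=
    hq t (by simpa using ht.trans (le_abs_self M))
  calc |((kernelPolynomial b).comp (kernelPolynomial a) - X).eval t|
      = |(q.eval ((kernelPolynomial a).eval t) - t) - q.eval 0| := by
        simp [hb, sub_right_comm]
    _ ≤ ε := by linarith [abs_sub (q.eval ((kernelPolynomial a).eval t) - t) (q.eval 0)]

lemma norm_aeval_le_of_isSelfAdjoint {A : Type*} [CStarAlgebra A] {T : A} (hT : IsSelfAdjoint T)
    {M : ℝ} (hTM : ‖T‖ ≤ M) (q : ℝ[X]) {c : ℝ}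
    (hq : ∀ t : ℝ, |t| ≤ M → |q.eval t| ≤ c) : ‖aeval T q‖ ≤ c := by
  have hc : 0 ≤ c :=
    (abs_nonneg _).trans (hq 0 (abs_zero.trans_le ((norm_nonneg T).trans hTM)))
  cases subsingleton_or_nontrivial A
  · rwa [Subsingleton.elim (aeval T q) 0, norm_zero]
  · rw [← cfc_polynomial q T hT]
    exact norm_cfc_le hc fun t ht => hq t ((spectrum.norm_le_norm_of_mem ht).trans hTM)

end Approximation

section OperatorApproximation

open Polynomial boundedKernel Filter Topology

variable {α : Type*} [MeasurableSpace α] {μ : Measure α} [IsProbabilityMeasure μ]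

lemma integralOperator.map_kernelPoly {n : ℕ} (a : Fin n → ℝ) (A : boundedKernel α) :
    integralOperator μ (kernelPoly μ a A) = aeval (integralOperator μ A) (kernelPolynomial a) := by
  simp [kernelPoly, kernelPolynomial, map_kernelPow, Algebra.smul_def]

/-- The bound `M` is common to all kernels so that two of them can be approximated by means of the
same polynomials. -/
lemma exists_tendsto_integralOperator_kernelPoly_kernelPoly {n : ℕ} {a : Fin n → ℝ}
    (ha : Function.Injective fun t : ℝ => (kernelPolynomial a).eval t) (M : ℝ) :
    ∃ (m : ℕ → ℕ) (b : ∀ k, Fin (m k) → ℝ), ∀ A ∈ symmKernel α, ‖integralOperator μ A‖ ≤ M →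
      Tendsto (fun k => integralOperator μ (kernelPoly μ (b k) (kernelPoly μ a A))) atTop
        (𝓝 (integralOperator μ A)) := by
  choose m b hb using fun k : ℕ =>
    exists_kernelPolynomial_comp_near_id ha M (Nat.one_div_pos_of_nat (α := ℝ) (n := k))
  refine ⟨m, b, fun A hA hAM => tendsto_iff_norm_sub_tendsto_zero.2 <|
    squeeze_zero (fun _ => norm_nonneg _) (fun k => ?_) tendsto_one_div_add_atTop_nhds_zero_nat⟩
  have hdiff : integralOperator μ (kernelPoly μ (b k) (kernelPoly μ a A)) - integralOperator μ A =
      aeval (integralOperator μ A) ((kernelPolynomial (b k)).comp (kernelPolynomial a) - X) := by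
    rw [integralOperator.map_kernelPoly, integralOperator.map_kernelPoly, map_sub, aeval_comp,
      aeval_X]
  rw [hdiff]
  exact norm_aeval_le_of_isSelfAdjoint (integralOperator.isSelfAdjoint hA) hAM _ (hb k)

end OperatorApproximation

section Resampling

variable {V α : Type*} [Fintype V] [MeasurableSpace α] {μ : Measure α} [IsProbabilityMeasure μ]

lemma measurePreserving_update (i : V) :
    MeasurePreserving (fun q : (V → α) × α => Function.update q.1 i q.2)
      ((Measure.pi fun _ => μ).prod μ) (Measure.pi fun _ => μ) := by
  have hmeas : Measurable fun q : (V → α) × α => Function.update q.1 i q.2 := by fun_prop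
  refine ⟨hmeas, (Measure.pi_eq fun s hs => ?_).symm⟩
  have hpre : (fun q : (V → α) × α => Function.update q.1 i q.2) ⁻¹' Set.univ.pi s =
      Set.univ.pi (Function.update s i Set.univ) ×ˢ s i := by
    ext q
    simp only [Set.mem_preimage, Set.mem_univ_pi, Set.mem_prod]
    rw [Function.forall_update_iff q.1 fun j y => y ∈ s j,
      Function.forall_update_iff s fun j t => q.1 j ∈ t]
    simp [and_comm]
  rw [Measure.map_apply hmeas (.univ_pi hs), hpre, Measure.prod_prod, Measure.pi_pi,
    ← Finset.mul_prod_erase _ _ (Finset.mem_univ i),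
    ← Finset.mul_prod_erase _ _ (Finset.mem_univ i),
    Function.update_self, measure_univ, one_mul, mul_comm]
  congr 1
  exact Finset.prod_congr rfl fun j hj => by rw [Function.update_of_ne (Finset.ne_of_mem_erase hj)]

lemma integral_pi_eq_integral_update {h : (V → α) → ℝ} (hh : Integrable h (Measure.pi fun _ => μ))
    (i : V) : ∫ x, h x ∂(Measure.pi fun _ => μ) =
      ∫ x, ∫ s, h (Function.update x i s) ∂μ ∂(Measure.pi fun _ => μ) := by
  have hmp := measurePreserving_update (V := V) (μ := μ) i
  calc ∫ x, h x ∂(Measure.pi fun _ => μ)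
      = ∫ q : (V → α) × α, h (Function.update q.1 i q.2) ∂(Measure.pi fun _ => μ).prod μ := by
        rw [← integral_map hmp.measurable.aemeasurable
          (by rw [hmp.map_eq]; exact hh.aestronglyMeasurable), hmp.map_eq]
    _ = ∫ x, ∫ s, h (Function.update x i s) ∂μ ∂(Measure.pi fun _ => μ) :=
        integral_prod _ (hmp.integrable_comp_of_integrable hh)

lemma integral_pi_eq_integral_update_update {h : (V → α) → ℝ} (hmeas : Measurable h) {C : ℝ}
    (hC : ∀ x, |h x| ≤ C) (i j : V) : ∫ x, h x ∂(Measure.pi fun _ => μ) =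
      ∫ x, ∫ s, ∫ t, h (Function.update (Function.update x i s) j t) ∂μ ∂μ
        ∂(Measure.pi fun _ => μ) := by
  have hintegrable : Integrable h (Measure.pi fun _ => μ) :=
    .of_bound hmeas.aestronglyMeasurable C (.of_forall hC)
  rw [integral_pi_eq_integral_update hintegrable j]
  have hjoint : StronglyMeasurable fun q : (V → α) × α => h (Function.update q.1 j q.2) :=
    (hmeas.comp (by fun_prop)).stronglyMeasurable
  refine integral_pi_eq_integral_update (h := fun x => ∫ t, h (Function.update x j t) ∂μ) ?_ i
  refine .of_bound hjoint.integral_prod_right.aestronglyMeasurable (C * μ.real Set.univ)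
    (.of_forall fun x => norm_integral_le_of_norm_le_const (.of_forall fun t => hC _))

/-- Fixing all variables but `x i` and `x j` turns the integral into a matrix coefficient of the
integral operator of `A`. -/
lemma abs_integral_pi_mul_mul_le {i j : V} (hij : i ≠ j) (A : boundedKernel α)
    {f g : (V → α) → ℝ} (hf : Measurable f) (hg : Measurable g) {C D : ℝ} (hfC : ∀ x, |f x| ≤ C)
    (hgD : ∀ x, |g x| ≤ D) (hfj : ∀ x t, f (Function.update x j t) = f x)
    (hgi : ∀ x s, g (Function.update x i s) = g x) :
    |∫ x, f x * A (x i) (x j) * g x ∂(Measure.pi fun _ => μ)| ≤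
      C * ‖integralOperator μ A‖ * D := by
  obtain ⟨E, -, hE⟩ := boundedKernel.exists_bound A
  have hmeas : Measurable fun x => f x * A (x i) (x j) * g x :=
    (hf.mul (boundedKernel.measurable_comp A (by fun_prop) (by fun_prop))).mul hg
  have hbound (x : V → α) : |f x * A (x i) (x j) * g x| ≤ C * E * D := by
    have hC := (abs_nonneg _).trans (hfC x)
    have hE' := (abs_nonneg _).trans (hE (x i) (x j))
    rw [abs_mul, abs_mul]
    exact mul_le_mul (mul_le_mul (hfC x) (hE _ _) (abs_nonneg _) hC) (hgD x) (abs_nonneg _)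
      (mul_nonneg hC hE')
  have hfactor (x : V → α) (s t : α) :
      f (Function.update (Function.update x i s) j t) *
        A (Function.update (Function.update x i s) j t i)
          (Function.update (Function.update x i s) j t j) *
        g (Function.update (Function.update x i s) j t) =
      f (Function.update x i s) * A s t * g (Function.update x j t) := by
    rw [hfj, Function.update_self, Function.update_of_ne hij, Function.update_self,
      Function.update_comm hij, hgi]
  rw [integral_pi_eq_integral_update_update hmeas hbound i j]
  simp only [hfactor]
  have hle : ∀ᵐ x ∂(Measure.pi fun _ : V => μ), ‖∫ s, ∫ t, f (Function.update x i s) * A s t *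
      g (Function.update x j t) ∂μ ∂μ‖ ≤ C * ‖integralOperator μ A‖ * D :=
    .of_forall fun x => integralOperator.abs_integral_mul_mul_le A
      (hf.comp (measurable_update x)) (hg.comp (measurable_update x))
      (fun s => hfC _) (fun t => hgD _)
  simpa using norm_integral_le_of_norm_le_const hle

end Resampling

section DecoratedDensity

open boundedKernel Function

variable {V ε α : Type*} [MeasurableSpace α]

/-- The product of the kernels `K e` over the edges `e ∈ s`, where `η e` is the (oriented) pair of
endpoints of `e` and `x` assigns points to vertices. -/
def edgeProd (η : ε → V × V) (K : ε → boundedKernel α) (s : Finset ε) (x : V → α) : ℝ :=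
  ∏ e ∈ s, K e (x (η e).1) (x (η e).2)

/-- A family of edges without loops and without parallel or antiparallel edges. -/
structure IsSimpleEdgeFamily (η : ε → V × V) : Prop where
  fst_ne_snd : ∀ e, (η e).1 ≠ (η e).2
  injective : Injective fun e => s((η e).1, (η e).2)

section EdgeProd

variable (η : ε → V × V) (K : ε → boundedKernel α) (s : Finset ε)

lemma measurable_edgeProd : Measurable (edgeProd η K s) :=
  Finset.measurable_fun_prod s fun e _ =>
    measurable_comp (K e) (measurable_pi_apply _) (measurable_pi_apply _)

lemma exists_bound_edgeProd : ∃ C, ∀ x, |edgeProd η K s x| ≤ C := by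
  choose C _ hC using fun e => exists_bound (K e)
  refine ⟨∏ e ∈ s, C e, fun x => ?_⟩
  rw [edgeProd, Finset.abs_prod]
  exact Finset.prod_le_prod (fun e _ => abs_nonneg _) fun e _ => hC e _ _

lemma integrable_edgeProd [Fintype V] (μ : Measure α) [IsFiniteMeasure μ] :
    Integrable (edgeProd η K s) (Measure.pi fun _ => μ) :=
  (exists_bound_edgeProd η K s).elim fun C hC =>
    .of_bound (measurable_edgeProd η K s).aestronglyMeasurable C (.of_forall hC)

variable {η s}

lemma edgeProd_update_kernel [DecidableEq ε] {e : ε} (he : e ∈ s) (A : boundedKernel α)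
    (x : V → α) :
    edgeProd η (update K e A) s x = A (x (η e).1) (x (η e).2) * edgeProd η K (s.erase e) x := by
  rw [edgeProd, ← Finset.mul_prod_erase s _ he, update_self]
  congr 1
  exact Finset.prod_congr rfl fun e' he' => by rw [update_of_ne (Finset.ne_of_mem_erase he')]

lemma edgeProd_update_point {v : V} (hv : ∀ e ∈ s, v ∉ s((η e).1, (η e).2)) (x : V → α) (t : α) :
    edgeProd η K s (update x v t) = edgeProd η K s x := by
  refine Finset.prod_congr rfl fun e he => ?_
  have hne := hv e he
  rw [Sym2.mem_iff, not_or] at hne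
  rw [update_of_ne (Ne.symm hne.1), update_of_ne (Ne.symm hne.2)]

end EdgeProd

variable [Fintype V] [Fintype ε]

/-- The homomorphism density of the graph with edges `η` in which the edge `e` is evaluated with
its own kernel `K e`, as a multilinear function of the kernels. -/
def decoratedDensity (μ : Measure α) [IsFiniteMeasure μ] (η : ε → V × V) :
    MultilinearMap ℝ (fun _ : ε => boundedKernel α) ℝ where
  toFun K := ∫ x, edgeProd η K Finset.univ x ∂(Measure.pi fun _ => μ)
  map_update_add' K e A B := by
    have hadd (x : V → α) : edgeProd η (update K e (A + B)) Finset.univ x =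
        edgeProd η (update K e A) Finset.univ x + edgeProd η (update K e B) Finset.univ x := by
      simp only [edgeProd_update_kernel K (Finset.mem_univ e)]
      exact add_mul _ _ _
    simp only [hadd]
    exact integral_add (integrable_edgeProd _ _ _ μ) (integrable_edgeProd _ _ _ μ)
  map_update_smul' K e c A := by
    have hsmul (x : V → α) : edgeProd η (update K e (c • A)) Finset.univ x =
        c * edgeProd η (update K e A) Finset.univ x := by
      simp only [edgeProd_update_kernel K (Finset.mem_univ e)]
      exact mul_assoc _ _ _
    simp only [hsmul]
    exact integral_const_mul _ _

lemma decoratedDensity_apply (μ : Measure α) [IsFiniteMeasure μ] (η : ε → V × V)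
    (K : ε → boundedKernel α) :
    decoratedDensity μ η K = ∫ x, edgeProd η K Finset.univ x ∂(Measure.pi fun _ => μ) := rfl

variable {μ : Measure α} [IsProbabilityMeasure μ] {η : ε → V × V}

/-- The counting lemma: since no other edge joins the endpoints of `e`, the product over the other
edges splits into a function independent of one endpoint and one independent of the other. -/
lemma exists_abs_decoratedDensity_update_le (hη : IsSimpleEdgeFamily η) (K : ε → boundedKernel α)
    (e : ε) : ∃ C, ∀ A, |decoratedDensity μ η (update K e A)| ≤ C * ‖integralOperator μ A‖ := by
  let incident (e' : ε) : Prop := (η e).2 ∈ s((η e').1, (η e').2)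
  let s := (Finset.univ.erase e).filter (¬ incident ·)
  let t := (Finset.univ.erase e).filter incident
  have hs : ∀ e' ∈ s, (η e).2 ∉ s((η e').1, (η e').2) := fun e' he' => (Finset.mem_filter.1 he').2
  have ht : ∀ e' ∈ t, (η e).1 ∉ s((η e').1, (η e').2) := fun e' he' hmem =>
    Finset.ne_of_mem_erase (Finset.mem_filter.1 he').1 (hη.injective
      ((Sym2.mem_and_mem_iff (hη.fst_ne_snd e)).1 ⟨hmem, (Finset.mem_filter.1 he').2⟩))
  obtain ⟨C, hC⟩ := exists_bound_edgeProd η K s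
  obtain ⟨D, hD⟩ := exists_bound_edgeProd η K t
  refine ⟨C * D, fun A => ?_⟩
  have hsplit (x : V → α) : edgeProd η (update K e A) Finset.univ x =
      edgeProd η K s x * A (x (η e).1) (x (η e).2) * edgeProd η K t x := by
    have hst : edgeProd η K t x * edgeProd η K s x = edgeProd η K (Finset.univ.erase e) x :=
      Finset.prod_filter_mul_prod_filter_not ..
    rw [edgeProd_update_kernel K (Finset.mem_univ e), ← hst]
    ring
  calc |decoratedDensity μ η (update K e A)|
      = |∫ x, edgeProd η K s x * A (x (η e).1) (x (η e).2) * edgeProd η K t x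
          ∂(Measure.pi fun _ => μ)| := by simp only [decoratedDensity_apply, hsplit]
    _ ≤ C * ‖integralOperator μ A‖ * D :=
        abs_integral_pi_mul_mul_le (hη.fst_ne_snd e) A (measurable_edgeProd η K s)
          (measurable_edgeProd η K t) hC hD (edgeProd_update_point K hs)
          (edgeProd_update_point K ht)
    _ = C * D * ‖integralOperator μ A‖ := mul_right_comm _ _ _

lemma tendsto_decoratedDensity_update {ι : Type*} {l : Filter ι} (hη : IsSimpleEdgeFamily η)
    (K : ε → boundedKernel α) (e : ε) {A : ι → boundedKernel α} {B : boundedKernel α}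
    (hA : Filter.Tendsto (fun k => integralOperator μ (A k)) l (nhds (integralOperator μ B))) :
    Filter.Tendsto (fun k => decoratedDensity μ η (update K e (A k))) l
      (nhds (decoratedDensity μ η (update K e B))) := by
  obtain ⟨C, hC⟩ := exists_abs_decoratedDensity_update_le (μ := μ) hη K e
  have hlim : Filter.Tendsto (fun k => C * ‖integralOperator μ (A k) - integralOperator μ B‖) l
      (nhds 0) := by
    simpa using (tendsto_iff_norm_sub_tendsto_zero.1 hA).const_mul C
  refine tendsto_iff_norm_sub_tendsto_zero.2
    (squeeze_zero (fun _ => norm_nonneg _) (fun k => ?_) hlim)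
  rw [← MultilinearMap.map_update_sub, ← map_sub]
  exact hC _

end DecoratedDensity

section IteratedLimit

open Filter Topology Function

lemma eq_of_tendsto_update {ε ι X X' Y : Type*} [Finite ε] [TopologicalSpace Y] [T2Space Y]
    {l : Filter ι} [l.NeBot] {F : (ε → X) → Y} {G : (ε → X') → Y} {u : ι → X} {v : ι → X'} {x : X}
    {y : X'} (hF : ∀ K e, Tendsto (fun k => F (update K e (u k))) l (𝓝 (F (update K e x))))
    (hG : ∀ K e, Tendsto (fun k => G (update K e (v k))) l (𝓝 (G (update K e y))))
    (h : ∀ r : ε → ι, F (u ∘ r) = G (v ∘ r)) : F (fun _ => x) = G (fun _ => y) := by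
  have hpiecewise (s : Finset ε) (r : ε → ι) :
      F (s.piecewise (fun _ => x) (u ∘ r)) = G (s.piecewise (fun _ => y) (v ∘ r)) := by
    induction s using Finset.induction generalizing r with
    | empty => simpa using h r
    | insert e s he ih =>
      rw [Finset.piecewise_insert, Finset.piecewise_insert]
      refine tendsto_nhds_unique (hF _ e) ((hG _ e).congr fun k => ?_)
      rw [Finset.update_piecewise_of_notMem _ _ _ he, Finset.update_piecewise_of_notMem _ _ _ he,
        ← comp_update, ← comp_update, ih]
  cases nonempty_fintype ε
  obtain ⟨k⟩ := l.nonempty_of_neBot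
  simpa using hpiecewise Finset.univ fun _ => k

end IteratedLimit

section GraphDensity

open boundedKernel Function

variable {α : Type*} [MeasurableSpace α]

/-- The homomorphism density of a graph in a kernel on an arbitrary measure space. -/
def graphDensity (μ : Measure α) {n : ℕ} (G : SimpleGraph (Fin n)) (A : α → α → ℝ) : ℝ :=
  ∫ x, ∏ p ∈ Finset.univ.filter (fun p : Fin n × Fin n => p.1 < p.2 ∧ G.Adj p.1 p.2),
    A (x p.1) (x p.2) ∂(Measure.pi fun _ : Fin n => μ)

/-- The edges of a graph on `Fin n`, oriented upwards. -/
def orientedEdges {n : ℕ} (G : SimpleGraph (Fin n)) :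
    {p : Fin n × Fin n // p.1 < p.2 ∧ G.Adj p.1 p.2} → Fin n × Fin n := Subtype.val

lemma isSimpleEdgeFamily_orientedEdges {n : ℕ} (G : SimpleGraph (Fin n)) :
    IsSimpleEdgeFamily (orientedEdges G) where
  fst_ne_snd e := e.2.1.ne
  injective := by
    rintro ⟨⟨i, j⟩, hij⟩ ⟨⟨k, l⟩, hkl⟩ h
    have hcases : i = k ∧ j = l ∨ i = l ∧ j = k := by simpa [orientedEdges] using h
    rcases hcases with ⟨rfl, rfl⟩ | ⟨rfl, rfl⟩
    · rfl
    · exact absurd hij.1 hkl.1.asymm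

lemma decoratedDensity_orientedEdges (μ : Measure α) [IsFiniteMeasure μ] {n : ℕ}
    (G : SimpleGraph (Fin n)) (A : boundedKernel α) :
    decoratedDensity μ (orientedEdges G) (fun _ => A) = graphDensity μ G A := by
  rw [decoratedDensity_apply, graphDensity]
  refine integral_congr_ae (.of_forall fun x => ?_)
  exact (Finset.prod_subtype _ (by simp) fun p : Fin n × Fin n => A (x p.1) (x p.2)).symm

/-- The simple graph underlying a family of edges. -/
def edgeGraph {V ε : Type*} (η : ε → V × V) : SimpleGraph V :=
  SimpleGraph.fromEdgeSet (Set.range fun e => s((η e).1, (η e).2))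

lemma prod_edgeGraph {n : ℕ} {M ε : Type*} [CommMonoid M] [Fintype ε] {η : ε → Fin n × Fin n}
    (hη : IsSimpleEdgeFamily η) {w : Fin n → Fin n → M} (hw : ∀ i j, w i j = w j i) :
    ∏ p ∈ Finset.univ.filter (fun p : Fin n × Fin n => p.1 < p.2 ∧ (edgeGraph η).Adj p.1 p.2),
      w p.1 p.2 = ∏ e, w (η e).1 (η e).2 := by
  have hedge (e : ε) : s(min (η e).1 (η e).2, max (η e).1 (η e).2) = s((η e).1, (η e).2) := by
    rcases le_total (η e).1 (η e).2 with h | h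
    · rw [min_eq_left h, max_eq_right h]
    · rw [min_eq_right h, max_eq_left h, Sym2.eq_swap]
  symm
  refine Finset.prod_nbij (fun e => (min (η e).1 (η e).2, max (η e).1 (η e).2)) ?_ ?_ ?_ ?_
  · intro e _
    have hlt : min (η e).1 (η e).2 < max (η e).1 (η e).2 := min_lt_max.2 (hη.fst_ne_snd e)
    exact Finset.mem_filter.2 ⟨Finset.mem_univ _, hlt,
      (SimpleGraph.fromEdgeSet_adj _).2 ⟨⟨e, (hedge e).symm⟩, hlt.ne⟩⟩
  · intro e _ e' _ h
    refine hη.injective ?_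
    have h' := congrArg (fun p : Fin n × Fin n => s(p.1, p.2)) h
    simpa only [hedge] using h'
  · rintro ⟨i, j⟩ hp
    obtain ⟨hlt, ⟨e, he⟩, -⟩ : i < j ∧ (∃ e, s((η e).1, (η e).2) = s(i, j)) ∧ i ≠ j := by
      simpa [edgeGraph] using hp
    refine ⟨e, Finset.mem_coe.2 (Finset.mem_univ e), ?_⟩
    rcases Sym2.eq_iff.1 he with ⟨h₁, h₂⟩ | ⟨h₁, h₂⟩ <;> simp [h₁, h₂, hlt.le]
  · intro e _
    rcases le_total (η e).1 (η e).2 with h | h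
    · simp only [min_eq_left h, max_eq_right h]
    · simp only [min_eq_right h, max_eq_left h, hw]

lemma decoratedDensity_eq_graphDensity_edgeGraph (μ : Measure α) [IsFiniteMeasure μ] {n : ℕ}
    {ε : Type*} [Fintype ε] {η : ε → Fin n × Fin n} (hη : IsSimpleEdgeFamily η)
    {A : boundedKernel α} (hA : A ∈ symmKernel α) :
    decoratedDensity μ η (fun _ => A) = graphDensity μ (edgeGraph η) A := by
  rw [decoratedDensity_apply, graphDensity]
  refine integral_congr_ae (.of_forall fun x => ?_)
  exact (prod_edgeGraph hη fun i j => hA (x i) (x j)).symm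

end GraphDensity

section Subdivision

open boundedKernel Function

variable {α : Type*} [MeasurableSpace α] {N : ℕ} {ε : Type*}

/-- Subdivision of the edge `e₀` by a new vertex `0`; the new edge `none` leads from it to the
second endpoint of `e₀`. -/
def subdivide (η : ε → Fin N × Fin N) (e₀ : ε) : Option ε → Fin (N + 1) × Fin (N + 1)
  | none => (0, (η e₀).2.succ)
  | some e => ((η e).1.succ, if e = e₀ then 0 else (η e).2.succ)

lemma isSimpleEdgeFamily_subdivide {η : ε → Fin N × Fin N} (hη : IsSimpleEdgeFamily η) (e₀ : ε) :
    IsSimpleEdgeFamily (subdivide η e₀) where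
  fst_ne_snd
    | none => (Fin.succ_ne_zero _).symm
    | some e => by
      by_cases he : e = e₀
      · simp [subdivide, he]
      · simpa [subdivide, he] using hη.fst_ne_snd e
  injective := by
    have hne := hη.fst_ne_snd e₀
    rintro (_ | e) (_ | e') h
    · rfl
    · by_cases he' : e' = e₀ <;> simp_all [subdivide, eq_comm]
    · by_cases he : e = e₀ <;> simp_all [subdivide, eq_comm]
    · by_cases he : e = e₀ <;> by_cases he' : e' = e₀
      · rw [he, he']
      · simp [subdivide, he, he', (Fin.succ_ne_zero _).symm] at h
      · simp [subdivide, he, he', Fin.succ_ne_zero] at h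
      · refine congrArg some (hη.injective (Sym2.eq_iff.2 ?_))
        simpa [subdivide, he, he'] using h

lemma decoratedDensity_update_comp (μ : Measure α) [IsFiniteMeasure μ] [Fintype ε]
    (η : ε → Fin N × Fin N) (e₀ : ε) (K : ε → boundedKernel α) (A B : boundedKernel α) :
    decoratedDensity μ η (update K e₀ (comp μ A B)) =
      decoratedDensity μ (subdivide η e₀) (Option.elim · B (update K e₀ A)) := by
  set K' : Option ε → boundedKernel α := (Option.elim · B (update K e₀ A))
  set f := edgeProd (subdivide η e₀) K' Finset.univ
  have hmp := (measurePreserving_piFinSuccAbove (fun _ : Fin (N + 1) => μ) 0).symm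
  set φ := (MeasurableEquiv.piFinSuccAbove (fun _ : Fin (N + 1) => α) 0).symm
  have hintegrable : Integrable (fun q => f (φ q)) (μ.prod (Measure.pi fun _ => μ)) :=
    (hmp.integrable_comp_emb φ.measurableEmbedding).2 (integrable_edgeProd _ K' _ μ)
  have hsubdiv (z : α) (x : Fin N → α) : f (φ (z, x)) =
      A (x (η e₀).1) z * B z (x (η e₀).2) * edgeProd η K (Finset.univ.erase e₀) x := by
    have hφ : φ (z, x) = Fin.cons z x := by
      simp [φ, MeasurableEquiv.piFinSuccAbove, Fin.consEquiv]
    have hrest : ∏ e ∈ Finset.univ.erase e₀, update K e₀ A e (x (η e).1)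
        ((Fin.cons z x : Fin (N + 1) → α) (if e = e₀ then 0 else (η e).2.succ)) =
          edgeProd η K (Finset.univ.erase e₀) x := by
      refine Finset.prod_congr rfl fun e he => ?_
      have hne := Finset.ne_of_mem_erase he
      rw [update_of_ne hne, if_neg hne, Fin.cons_succ]
    rw [hφ, ← hrest]
    simp only [f, K', edgeProd, Fintype.prod_option,
      ← Finset.mul_prod_erase _ _ (Finset.mem_univ e₀), subdivide, Fin.cons_zero,
      Fin.cons_succ, update_self, if_true, Option.elim]
    ring
  calc ∫ x, edgeProd η (update K e₀ (comp μ A B)) Finset.univ x ∂(Measure.pi fun _ => μ)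
      = ∫ x, ∫ z, f (φ (z, x)) ∂μ ∂(Measure.pi fun _ => μ) := by
        simp only [edgeProd_update_kernel K (Finset.mem_univ e₀), hsubdiv, integral_mul_const]
        rfl
    _ = ∫ q, f (φ q) ∂(μ.prod (Measure.pi fun _ => μ)) := (integral_prod_symm _ hintegrable).symm
    _ = ∫ x, f x ∂(Measure.pi fun _ => μ) := hmp.integral_comp' f

end Subdivision

section DensitySpan

open boundedKernel Function

variable {α : Type*} [MeasurableSpace α]

/-- The space of finite linear combinations of homomorphism densities (quantum graphs), as
functions of a symmetric kernel. -/
def densitySpan (μ : Measure α) : Submodule ℝ (symmKernel α → ℝ) :=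
  Submodule.span ℝ (Set.range fun (G : Σ n, SimpleGraph (Fin n)) (A : symmKernel α) =>
    graphDensity μ G.2 A.1)

lemma exists_finset_graphDensity_determines {μ : Measure α} {ι : Type*} [Finite ι]
    {Φ : ι → symmKernel α → ℝ} (hΦ : ∀ i, Φ i ∈ densitySpan μ) :
    ∃ s : Finset (Σ n, SimpleGraph (Fin n)), ∀ A B : symmKernel α,
      (∀ G ∈ s, graphDensity μ G.2 A.1 = graphDensity μ G.2 B.1) → ∀ i, Φ i A = Φ i B := by
  choose c hc using fun i => (Finsupp.mem_span_range_iff_exists_finsupp).1 (hΦ i)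
  cases nonempty_fintype ι
  refine ⟨Finset.univ.biUnion fun i => (c i).support, fun A B hAB i => ?_⟩
  rw [← hc, Finsupp.sum, Finset.sum_apply, Finset.sum_apply]
  refine Finset.sum_congr rfl fun G hG => ?_
  exact congrArg (c i G * ·) (hAB G (Finset.mem_biUnion.2 ⟨i, Finset.mem_univ i, hG⟩))

variable (μ : Measure α) [IsFiniteMeasure μ]

lemma decoratedDensity_kernelPow_mem_densitySpan {N : ℕ} {ε : Type} [Fintype ε]
    {η : ε → Fin N × Fin N} (hη : IsSimpleEdgeFamily η) (l : ε → ℕ) :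
    (fun A : symmKernel α => decoratedDensity μ η fun e => kernelPow μ A (l e)) ∈
      densitySpan μ := by
  induction hd : ∑ e, l e generalizing N ε with
  | zero =>
    have hl : l = 0 := by simpa [funext_iff] using hd
    refine Submodule.subset_span ⟨⟨N, edgeGraph η⟩, funext fun A => ?_⟩
    simp only [hl]
    exact (decoratedDensity_eq_graphDensity_edgeGraph μ hη A.2).symm
  | succ d ih =>
    obtain ⟨e₀, he₀⟩ : ∃ e, l e ≠ 0 := by
      by_contra! h
      simp [h] at hd
    obtain ⟨i, hi⟩ := Nat.exists_eq_succ_of_ne_zero he₀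
    set l' : Option ε → ℕ := (Option.elim · 0 (update l e₀ i))
    have hl' : ∑ e, l' e = d := by
      have hsum : l e₀ + ∑ e ∈ Finset.univ.erase e₀, l e = d + 1 := by
        rw [Finset.add_sum_erase _ _ (Finset.mem_univ e₀), hd]
      have hupd : ∑ e, update l e₀ i e = i + ∑ e ∈ Finset.univ.erase e₀, l e := by
        rw [Finset.sum_update_of_mem (Finset.mem_univ e₀), Finset.erase_eq]
      have hopt : ∑ e, l' e = 0 + ∑ e, update l e₀ i e := Fintype.sum_option l'
      omega
    convert ih (isSimpleEdgeFamily_subdivide hη e₀) l' hl' using 2 with A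
    have hfactor : (fun e => kernelPow μ A (l e)) =
        update (fun e => kernelPow μ A (l e)) e₀ (comp μ (kernelPow μ A i) A) := by
      rw [eq_comm, update_eq_self_iff, hi]
      rfl
    rw [hfactor, decoratedDensity_update_comp]
    congr 1
    ext1 (_ | e)
    · rfl
    · exact (apply_update (fun _ => kernelPow μ A.1) l e₀ i e).symm

lemma decoratedDensity_kernelPoly_mem_densitySpan {N : ℕ} {ε : Type} [Fintype ε]
    {η : ε → Fin N × Fin N} (hη : IsSimpleEdgeFamily η) {m : ε → ℕ} (a : ∀ e, Fin (m e) → ℝ) :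
    (fun A : symmKernel α => decoratedDensity μ η fun e => kernelPoly μ (a e) A) ∈
      densitySpan μ := by
  have hexpand : (fun A : symmKernel α => decoratedDensity μ η fun e => kernelPoly μ (a e) A) =
      ∑ r : ∀ e, Fin (m e), (∏ e, a e (r e)) •
        fun A : symmKernel α => decoratedDensity μ η fun e => kernelPow μ A (r e) := by
    ext A
    simp only [kernelPoly, MultilinearMap.map_sum, MultilinearMap.map_smul_univ,
      Finset.sum_apply, Pi.smul_apply]
  rw [hexpand]
  exact Submodule.sum_mem _ fun r _ => Submodule.smul_mem _ _
    (decoratedDensity_kernelPow_mem_densitySpan μ hη _)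

end DensitySpan

section DensityTransfer

open boundedKernel Filter Topology Function

variable {α : Type*} [MeasurableSpace α]

lemma exists_finset_graphDensity_kernelPoly_determines (μ : Measure α) [IsFiniteMeasure μ]
    {ι : Type*} [Finite ι] (F : ι → Σ n, SimpleGraph (Fin n)) {n : ℕ} (a : Fin n → ℝ) :
    ∃ s : Finset (Σ n, SimpleGraph (Fin n)), ∀ A B : symmKernel α,
      (∀ G ∈ s, graphDensity μ G.2 A.1 = graphDensity μ G.2 B.1) → ∀ i,
        graphDensity μ (F i).2 (kernelPoly μ a A.1) =
          graphDensity μ (F i).2 (kernelPoly μ a B.1) := by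
  refine exists_finset_graphDensity_determines fun i => ?_
  simpa only [decoratedDensity_orientedEdges] using
    decoratedDensity_kernelPoly_mem_densitySpan μ (isSimpleEdgeFamily_orientedEdges (F i).2)
      fun _ => a

lemma graphDensity_eq_of_kernelPoly {μ : Measure α} [IsProbabilityMeasure μ] {n : ℕ}
    {a : Fin n → ℝ} (ha : Injective fun t => (kernelPolynomial a).eval t) {A B : boundedKernel α}
    (hA : A ∈ symmKernel α) (hB : B ∈ symmKernel α)
    (h : ∀ (m : ℕ) (G : SimpleGraph (Fin m)),
      graphDensity μ G (kernelPoly μ a A) = graphDensity μ G (kernelPoly μ a B))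
    {m : ℕ} (G : SimpleGraph (Fin m)) : graphDensity μ G A = graphDensity μ G B := by
  obtain ⟨d, b, hb⟩ := exists_tendsto_integralOperator_kernelPoly_kernelPoly (μ := μ) ha
    (max ‖integralOperator μ A‖ ‖integralOperator μ B‖)
  have hG := isSimpleEdgeFamily_orientedEdges G
  rw [← decoratedDensity_orientedEdges, ← decoratedDensity_orientedEdges]
  refine eq_of_tendsto_update (u := fun k => kernelPoly μ (b k) (kernelPoly μ a A))
    (v := fun k => kernelPoly μ (b k) (kernelPoly μ a B))
    (fun K e => tendsto_decoratedDensity_update hG K e (hb A hA (le_max_left _ _)))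
    (fun K e => tendsto_decoratedDensity_update hG K e (hb B hB (le_max_right _ _))) fun r => ?_
  obtain ⟨s, hs⟩ := exists_finset_graphDensity_determines fun _ : Unit =>
    decoratedDensity_kernelPoly_mem_densitySpan μ hG fun e => b (r e)
  exact hs ⟨_, kernelPoly_mem_symmKernel a hA⟩ ⟨_, kernelPoly_mem_symmKernel a hB⟩
    (fun G _ => h G.1 G.2) ()

end DensityTransfer

section UnitSquare

open boundedKernel Function

instance isProbabilityMeasure_restrict_I01 :
    IsProbabilityMeasure (volume.restrict I01 : Measure ℝ) := ⟨by simp [I01]⟩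

lemma homDensity_eq_graphDensity {m : ℕ} (G : SimpleGraph (Fin m)) (U : ℝ → ℝ → ℝ) :
    homDensity G U = graphDensity (volume.restrict I01) G U := by
  rw [homDensity, graphDensity, cube, volume_pi, Measure.restrict_pi_pi]

lemma kerPow_eq_kernelPow (A : boundedKernel ℝ) (i : ℕ) :
    kerPow A i = kernelPow (volume.restrict I01) A i := by
  induction i with
  | zero => rfl
  | succ i ih => exact congrArg (kerMul · A) ih

lemma kerPoly_eq_kernelPoly {n : ℕ} (a : Fin n → ℝ) (A : boundedKernel ℝ) :
    kerPoly n a A = kernelPoly (volume.restrict I01) a A := by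
  ext x y
  simp [kerPoly, kernelPoly, kerPow_eq_kernelPow]

lemma memW_of_mem_symmKernel {A : boundedKernel ℝ} (hA : A ∈ symmKernel ℝ) : memW A :=
  ⟨A.2.1, fun x _ y _ => hA x y, A.2.2.imp fun _ h x _ y _ => h x y⟩

/-- Two kernels agree on the unit square, which is all that their densities depend on. -/
def EqOnSquare (U V : ℝ → ℝ → ℝ) : Prop := ∀ x ∈ I01, ∀ y ∈ I01, U x y = V x y

namespace EqOnSquare

variable {U V : ℝ → ℝ → ℝ}

lemma kerPow_congr (h : EqOnSquare U V) (i : ℕ) : EqOnSquare (kerPow U i) (kerPow V i) := by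
  induction i with
  | zero => exact h
  | succ i ih =>
    intro x hx y hy
    exact setIntegral_congr_fun measurableSet_Icc fun z hz =>
      congrArg₂ (· * ·) (ih x hx z hz) (h z hz y hy)

lemma kerPoly_congr (h : EqOnSquare U V) (n : ℕ) (a : Fin n → ℝ) :
    EqOnSquare (kerPoly n a U) (kerPoly n a V) := fun x hx y hy =>
  Finset.sum_congr rfl fun i _ => congrArg (a i * ·) (h.kerPow_congr i x hx y hy)

lemma homDensity_congr (h : EqOnSquare U V) {m : ℕ} (G : SimpleGraph (Fin m)) :
    homDensity G U = homDensity G V :=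
  setIntegral_congr_fun (MeasurableSet.univ_pi fun _ => measurableSet_Icc) fun _ hx =>
    Finset.prod_congr rfl fun p _ => h _ (hx p.1 trivial) _ (hx p.2 trivial)

lemma homDensity_eq {A : boundedKernel ℝ} (h : EqOnSquare A U) {m : ℕ}
    (G : SimpleGraph (Fin m)) :
    homDensity G U = graphDensity (volume.restrict I01) G A := by
  rw [← h.homDensity_congr, homDensity_eq_graphDensity]

lemma homDensity_kerPoly_eq {A : boundedKernel ℝ} (h : EqOnSquare A U) {n : ℕ}
    (a : Fin n → ℝ) {m : ℕ} (G : SimpleGraph (Fin m)) :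
    homDensity G (kerPoly n a U) =
      graphDensity (volume.restrict I01) G (kernelPoly (volume.restrict I01) a A) := by
  rw [← (h.kerPoly_congr n a).homDensity_congr, kerPoly_eq_kernelPoly, homDensity_eq_graphDensity]

end EqOnSquare

lemma exists_symmKernel_eqOnSquare {U : ℝ → ℝ → ℝ} (hU : memW U) :
    ∃ A ∈ symmKernel ℝ, EqOnSquare A U := by
  obtain ⟨hmeas, hsymm, C, hC⟩ := hU
  have hI : MeasurableSet I01 := measurableSet_Icc
  refine ⟨⟨fun x y => if x ∈ I01 ∧ y ∈ I01 then U x y else 0, ?_, |C|, fun x y => ?_⟩,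
    fun x y => ?_, fun x hx y hy => if_pos ⟨hx, hy⟩⟩
  · exact Measurable.ite ((hI.preimage measurable_fst).inter (hI.preimage measurable_snd)) hmeas
      measurable_const
  · dsimp only
    split_ifs with h
    · exact (hC x h.1 y h.2).trans (le_abs_self C)
    · simp
  · by_cases h : x ∈ I01 ∧ y ∈ I01
    · simpa [h] using hsymm x h.1 y h.2
    · simp [h, and_comm]

lemma finitelyForcible_of_finset {𝒜 : (ℝ → ℝ → ℝ) → Prop} {W : ℝ → ℝ → ℝ} (hW : 𝒜 W)
    (s : Finset (Σ n, SimpleGraph (Fin n)))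
    (hs : ∀ U, 𝒜 U → (∀ G ∈ s, homDensity G.2 U = homDensity G.2 W) → WeaklyIsomorphic U W) :
    FinitelyForcible 𝒜 W :=
  ⟨hW, s.card, fun i => (s.equivFin.symm i).1.1, fun i => (s.equivFin.symm i).1.2,
    fun U hU h => hs U hU fun G hG => by
      obtain ⟨i, hi⟩ := s.equivFin.symm.surjective ⟨G, hG⟩
      have hi' : homDensity (s.equivFin.symm i).1.2 U = homDensity (s.equivFin.symm i).1.2 W := h i
      rwa [hi] at hi'⟩

end UnitSquare

/-- if `p` is a real polynomial with zero constant term which is a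
bijection of `ℝ`, `W ∈ 𝒲`, and `p(W)` is finitely forcible in `𝒲`, then so is `W`. -/
theorem statement4 (n : ℕ) (a : Fin n → ℝ)
    (hbij : Function.Bijective fun t : ℝ => ∑ i, a i * t ^ ((i : ℕ) + 1))
    (W : ℝ → ℝ → ℝ) (hW : memW W)
    (h : FinitelyForcible memW (kerPoly n a W)) :
    FinitelyForcible memW W := by
  obtain ⟨-, k, m, F, hF⟩ := h
  set μ : Measure ℝ := volume.restrict I01
  obtain ⟨B, hB, hBW⟩ := exists_symmKernel_eqOnSquare hW
  obtain ⟨s, hs⟩ := exists_finset_graphDensity_kernelPoly_determines μ (fun i => ⟨m i, F i⟩) a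
  refine finitelyForcible_of_finset hW s fun U hU hUW => ?_
  obtain ⟨A, hA, hAU⟩ := exists_symmKernel_eqOnSquare hU
  have hAB : ∀ G ∈ s, graphDensity μ G.2 A = graphDensity μ G.2 B := fun G hG => by
    simpa only [hAU.homDensity_eq, hBW.homDensity_eq] using hUW G hG
  have hforced : WeaklyIsomorphic (boundedKernel.kernelPoly μ a A) (kerPoly n a W) := by
    refine hF _ (memW_of_mem_symmKernel (boundedKernel.kernelPoly_mem_symmKernel a hA)) fun i => ?_
    rw [homDensity_eq_graphDensity, hBW.homDensity_kerPoly_eq]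
    exact hs ⟨A, hA⟩ ⟨B, hB⟩ hAB i
  have hinj : Function.Injective fun t => (kernelPolynomial a).eval t := by
    simpa only [eval_kernelPolynomial] using hbij.injective
  intro l G
  rw [hAU.homDensity_eq, hBW.homDensity_eq]
  refine graphDensity_eq_of_kernelPoly hinj hA hB (fun r H => ?_) G
  rw [← homDensity_eq_graphDensity, hforced, hBW.homDensity_kerPoly_eq]
end
end
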